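/- Let n ≥ 3 and let f ∈ Out(F_n). If there exist distinct indices i, j such that the image in Out(F_n) of the left multiplication L_{x_i x_j} is contained in the normal closure N(f) of f in Out(F_n), then N(f) = SOut(F_n) if det(ρ̄(f)) = 1, and N(f) = Out(F_n) if det(ρ̄(f)) = −1. -/

import Mathlib

open Matrix

namespace NormalClosurePaper

/-- The automorphism group of the free group on `n` generators. -/
abbrev FrAut (n : ℕ) := MulAut (FreeGroup (Fin n))

/-- Exponent sum of the generator `x_i` in a word of the free group. -/
def expSum {n : ℕ} (i : Fin n) : FreeGroup (Fin n) →* Multiplicative ℤ :=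
  FreeGroup.lift fun j => Multiplicative.ofAdd (if j = i then (1 : ℤ) else 0)

/-- The abelianized matrix of an automorphism of the free group:
the `(i, j)` entry is the exponent sum of `x_i` in `f x_j`. -/
def mat {n : ℕ} (f : FrAut n) : Matrix (Fin n) (Fin n) ℤ :=
  Matrix.of fun i j => (expSum i (f (FreeGroup.of j))).toAdd

lemma expSum_apply {n : ℕ} (f : FrAut n) (i : Fin n) (w : FreeGroup (Fin n)) :
    (expSum i (f w)).toAdd = ∑ k, mat f i k * (expSum k w).toAdd := by
  induction w using FreeGroup.induction_on with
  | C1 => simp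
  | of j =>
      have h : (expSum i (f (FreeGroup.of j))).toAdd = mat f i j := rfl
      rw [h]
      simp [expSum, mul_ite, Finset.sum_ite_eq]
  | inv_of j ih =>
      simp only [_root_.map_inv, toAdd_inv, mul_neg, Finset.sum_neg_distrib, ih]
  | mul x y ihx ihy =>
      simp only [_root_.map_mul, toAdd_mul, mul_add, Finset.sum_add_distrib, ihx, ihy]

lemma mat_one {n : ℕ} : mat (1 : FrAut n) = 1 := by
  ext i j
  simp [mat, expSum, Matrix.one_apply, eq_comm]

lemma mat_mul {n : ℕ} (f g : FrAut n) : mat (f * g) = mat f * mat g := by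
  ext i j
  rw [Matrix.mul_apply]
  show (expSum i ((f * g) (FreeGroup.of j))).toAdd = _
  rw [show (f * g) (FreeGroup.of j) = f (g (FreeGroup.of j)) from rfl, expSum_apply]
  rfl

/-- The matrix of the induced map on the abelianization, as a monoid homomorphism. -/
def matHom (n : ℕ) : FrAut n →* Matrix (Fin n) (Fin n) ℤ where
  toFun := mat
  map_one' := mat_one
  map_mul' := mat_mul

/-- The homomorphism `Aut(F_n) → GL_n(ℤ)` induced by abelianization. -/
def ρ (n : ℕ) : FrAut n →* GL (Fin n) ℤ := (matHom n).toHomUnits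

/-- The composition of `ρ` with the determinant. -/
def detρ (n : ℕ) : FrAut n →* ℤˣ := (Matrix.GeneralLinearGroup.det).comp (ρ n)

/-- The special automorphism group `SAut(F_n)`: automorphisms whose induced matrix
has determinant `1`. -/
def SAut (n : ℕ) : Subgroup (FrAut n) := (detρ n).ker

/-- The Torelli subgroup `IA_n`, the kernel of `ρ`. -/
def IA (n : ℕ) : Subgroup (FrAut n) := (ρ n).ker

/-- The group of inner automorphisms of the free group. -/
def Inn (n : ℕ) : Subgroup (FrAut n) := (MulAut.conj (G := FreeGroup (Fin n))).range

instance Inn_normal (n : ℕ) : (Inn n).Normal := by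
  constructor
  rintro - ⟨a, rfl⟩ g
  refine ⟨g a, ?_⟩
  ext y
  simp [MulAut.conj_apply, MulAut.mul_apply, _root_.map_mul, _root_.map_inv]

/-- The outer automorphism group `Out(F_n)`. -/
abbrev OutF (n : ℕ) := FrAut n ⧸ Inn n

/-- The projection `Aut(F_n) → Out(F_n)`. -/
def toOut (n : ℕ) : FrAut n →* OutF n := QuotientGroup.mk' (Inn n)

lemma mat_conj {n : ℕ} (g : FreeGroup (Fin n)) : mat (MulAut.conj g) = 1 := by
  rw [← mat_one (n := n)]
  ext i j
  simp only [mat, Matrix.of_apply, MulAut.conj_apply, MulAut.one_apply, _root_.map_mul,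
    _root_.map_inv, toAdd_mul, toAdd_inv]
  omega

lemma ρ_conj {n : ℕ} (g : FreeGroup (Fin n)) : ρ n (MulAut.conj g) = 1 :=
  Units.ext (mat_conj g)

/-- The homomorphism `Out(F_n) → GL_n(ℤ)` induced by abelianization. -/
def ρOut (n : ℕ) : OutF n →* GL (Fin n) ℤ :=
  QuotientGroup.lift (Inn n) (ρ n) (by rintro - ⟨g, rfl⟩; exact ρ_conj g)

/-- The composition of `ρOut` with the determinant. -/
def detρOut (n : ℕ) : OutF n →* ℤˣ := (Matrix.GeneralLinearGroup.det).comp (ρOut n)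

/-- The special outer automorphism group `SOut(F_n)`. -/
def SOut (n : ℕ) : Subgroup (OutF n) := (detρOut n).ker

/-- Entrywise reduction `GL_n(ℤ) → GL_n(ℤ/ℓℤ)`. -/
def redGL (n ℓ : ℕ) : GL (Fin n) ℤ →* GL (Fin n) (ZMod ℓ) :=
  Units.map (RingHom.mapMatrix (Int.castRingHom (ZMod ℓ))).toMonoidHom

/-- The subgroup `GΓ_n(ℓ)` of `GL_n(ℤ)` of matrices congruent to the identity mod `ℓ`. -/
def GGamma (n ℓ : ℕ) : Subgroup (GL (Fin n) ℤ) := (redGL n ℓ).ker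

/-- The level `ℓ` congruence subgroup `Γ_n(ℓ)` (viewed inside `GL_n(ℤ)`): matrices with
determinant `1` that are congruent to the identity mod `ℓ`. -/
def GammaGL (n ℓ : ℕ) : Subgroup (GL (Fin n) ℤ) :=
  GGamma n ℓ ⊓ (Matrix.GeneralLinearGroup.det).ker

/-- Reduction `SL_n(ℤ) → SL_n(ℤ/ℓℤ)`. -/
def redSL (n ℓ : ℕ) : Matrix.SpecialLinearGroup (Fin n) ℤ →*
    Matrix.SpecialLinearGroup (Fin n) (ZMod ℓ) :=
  Matrix.SpecialLinearGroup.map (Int.castRingHom (ZMod ℓ))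

/-- Projection `SL_n(ℤ/ℓℤ) → PSL_n(ℤ/ℓℤ)`. -/
def projPSL (n ℓ : ℕ) : Matrix.SpecialLinearGroup (Fin n) (ZMod ℓ) →*
    Matrix.ProjectiveSpecialLinearGroup (Fin n) (ZMod ℓ) :=
  QuotientGroup.mk' _

/-!
By Nielsen's theorem `Aut(F_n)` is generated by transvections and inversions. All transvections
are conjugate under signed permutations of the generators, and a product of three of them swaps two
generators up to an inversion. So modulo the normal closure of a single transvection all inversions
agree, and that normal closure is already the whole of `SAut(F_n)`; now pass to `Out(F_n)`.

Nielsen's theorem is proved by reduction. As long as some transvection makes the images of the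
generators smaller, apply it; here words are compared by length, and words of equal length by the
lexicographic ranks of their initial halves and of those of their inverses. When no transvection
helps, the images of the generators are Nielsen reduced: in the image of a reduced word, every
letter contributes at least one letter that is never cancelled. So the inverse automorphism does
not increase length, and hence permutes the generators up to inversion.
-/

section Letters

variable {α β : Type*}

/-- The element of the free group represented by a one-letter word: `letter (i, true)` is the `i`-th
generator and `letter (i, false)` is its inverse. -/
def letter (a : α × Bool) : FreeGroup α := FreeGroup.mk [a]

/-- The formal inverse of a letter. -/
def invLetter (a : α × Bool) : α × Bool := (a.1, !a.2)

@[simp]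
lemma letter_true (i : α) : letter (i, true) = FreeGroup.of i := rfl

@[simp]
lemma letter_false (i : α) : letter (i, false) = (FreeGroup.of i)⁻¹ := rfl

@[simp]
lemma letter_invLetter (a : α × Bool) : letter (invLetter a) = (letter a)⁻¹ := rfl

@[simp]
lemma invLetter_invLetter (a : α × Bool) : invLetter (invLetter a) = a := by
  simp [invLetter]

lemma ne_invLetter_self (a : α × Bool) : a ≠ invLetter a := by
  simp [invLetter, Prod.ext_iff]

lemma eq_or_eq_invLetter {a b : α × Bool} (h : a.1 = b.1) : b = a ∨ b = invLetter a := by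
  obtain ⟨i, s⟩ := a
  obtain ⟨j, t⟩ := b
  cases s <;> cases t <;> simp_all [invLetter]

lemma letter_mul_mk (a : α × Bool) (l : List (α × Bool)) :
    letter a * FreeGroup.mk l = FreeGroup.mk (a :: l) :=
  FreeGroup.mul_mk

lemma isReduced_cons_cons_iff {a b : α × Bool} {l : List (α × Bool)} :
    FreeGroup.IsReduced (a :: b :: l) ↔ b ≠ invLetter a ∧ FreeGroup.IsReduced (b :: l) := by
  rw [FreeGroup.IsReduced, List.isChain_cons_cons]
  refine and_congr_left fun _ => ?_
  obtain ⟨i, s⟩ := a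
  obtain ⟨j, t⟩ := b
  cases s <;> cases t <;> simp [invLetter, eq_comm]

lemma letter_ne_one (a : α × Bool) : letter a ≠ 1 := by
  obtain ⟨i, _ | _⟩ := a <;> simp

lemma letter_injective : Function.Injective (letter (α := α)) := by
  classical
  intro a b h
  simpa [letter] using congrArg FreeGroup.toWord h

lemma exists_eq_letter_of_norm_eq_one [DecidableEq α] {u : FreeGroup α} (hu : u.norm = 1) :
    ∃ a, u = letter a := by
  obtain ⟨a, ha⟩ := List.length_eq_one_iff.1 hu
  exact ⟨a, by rw [letter, ← ha, FreeGroup.mk_toWord]⟩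

lemma fst_ne_fst_of_map_letter {φ : FreeGroup α →* FreeGroup β} (hφ : Function.Injective φ)
    {a b : α × Bool} {c d : β × Bool} (hc : φ (letter a) = letter c) (hd : φ (letter b) = letter d)
    (hab : a.1 ≠ b.1) : c.1 ≠ d.1 := by
  intro hcd
  rcases eq_or_eq_invLetter hcd with rfl | rfl
  · exact hab (congrArg Prod.fst (letter_injective (hφ (hc.trans hd.symm))))
  · rw [letter_invLetter, ← hc, ← map_inv, ← letter_invLetter] at hd
    exact hab (congrArg Prod.fst (letter_injective (hφ hd))).symm

lemma hom_ext_letter {G : Type*} [Group G] {f g : FreeGroup α →* G} (b : α × Bool)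
    (hb : f (letter b) = g (letter b))
    (h : ∀ k, k ≠ b.1 → f (FreeGroup.of k) = g (FreeGroup.of k)) : f = g := by
  refine FreeGroup.ext_hom _ _ fun k => ?_
  by_cases hk : k = b.1
  · subst hk
    obtain ⟨k, _ | _⟩ := b <;> simpa using hb
  · exact h k hk

end Letters

section Cancellation

/-- The length of the longest common prefix of two lists. -/
def commonPrefixLength {β : Type*} [DecidableEq β] : List β → List β → ℕ
  | a :: l, b :: m => if a = b then commonPrefixLength l m + 1 else 0
  | _, _ => 0

lemma le_commonPrefixLength_iff {β : Type*} [DecidableEq β] {k : ℕ} {l m : List β} :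
    k ≤ commonPrefixLength l m ↔ k ≤ l.length ∧ k ≤ m.length ∧ l.take k = m.take k := by
  induction l generalizing k m with
  | nil => cases k <;> simp [commonPrefixLength]
  | cons a l ih =>
    cases m with
    | nil => cases k <;> simp [commonPrefixLength]
    | cons b m =>
      cases k with
      | zero => simp
      | succ k => by_cases hab : a = b <;> simp [commonPrefixLength, hab, ih]

lemma isReduced_invRev {α : Type*} {l : List (α × Bool)} (hl : FreeGroup.IsReduced l) :
    FreeGroup.IsReduced (FreeGroup.invRev l) := by
  classical
  rw [FreeGroup.isReduced_iff_reduce_eq, FreeGroup.reduce_invRev, hl.reduce_eq]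

lemma isReduced_invRev_append {α : Type*} {a b : α × Bool} {l m : List (α × Bool)}
    (hab : a ≠ b) (hl : FreeGroup.IsReduced (a :: l)) (hm : FreeGroup.IsReduced (b :: m)) :
    FreeGroup.IsReduced (FreeGroup.invRev (a :: l) ++ b :: m) := by
  refine List.IsChain.append (isReduced_invRev hl) hm ?_
  simp only [FreeGroup.invRev, List.map_cons, List.reverse_cons, List.getLast?_append,
    List.getLast?_singleton, List.head?_cons, Option.mem_def, Option.some.injEq, Option.some_or]
  rintro _ rfl _ rfl hfst
  by_contra hsnd
  exact hab (Prod.ext hfst (by simpa using hsnd))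

variable {α : Type*} [DecidableEq α]

lemma norm_mk_of_isReduced {l : List (α × Bool)} (hl : FreeGroup.IsReduced l) :
    (FreeGroup.mk l).norm = l.length := by
  rw [FreeGroup.norm, FreeGroup.toWord_mk, hl.reduce_eq]

lemma isReduced_of_norm_mk_eq {l : List (α × Bool)} (h : (FreeGroup.mk l).norm = l.length) :
    FreeGroup.IsReduced l :=
  .of_reduce_eq (FreeGroup.reduce.red.sublist.eq_of_length
    (by rwa [FreeGroup.norm, FreeGroup.toWord_mk] at h))

lemma norm_inv_mk_mul_mk {l m : List (α × Bool)} (hl : FreeGroup.IsReduced l)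
    (hm : FreeGroup.IsReduced m) :
    ((FreeGroup.mk l)⁻¹ * FreeGroup.mk m).norm + 2 * commonPrefixLength l m =
      l.length + m.length := by
  induction l generalizing m with
  | nil => simp [commonPrefixLength, ← FreeGroup.one_eq_mk, norm_mk_of_isReduced hm]
  | cons a l ih =>
    cases m with
    | nil =>
      rw [← FreeGroup.one_eq_mk, mul_one, FreeGroup.norm_inv_eq, norm_mk_of_isReduced hl]
      simp [commonPrefixLength]
    | cons b m =>
      by_cases hab : a = b
      · subst hab
        have hcancel : (FreeGroup.mk (a :: l))⁻¹ * FreeGroup.mk (a :: m) =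
            (FreeGroup.mk l)⁻¹ * FreeGroup.mk m := by
          rw [← letter_mul_mk, ← letter_mul_mk]
          group
        have htail := ih (List.IsChain.tail hl) (List.IsChain.tail hm)
        simp only [List.tail_cons] at htail
        rw [hcancel, commonPrefixLength, if_pos rfl, List.length_cons, List.length_cons]
        omega
      · rw [FreeGroup.inv_mk, FreeGroup.mul_mk,
          norm_mk_of_isReduced (isReduced_invRev_append hab hl hm)]
        simp [commonPrefixLength, hab]

/-- The number of letters of `u`, or equivalently of `v`, that cancel in the product `u * v`. -/
def cancellation (u v : FreeGroup α) : ℕ := commonPrefixLength u⁻¹.toWord v.toWord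

lemma le_cancellation_iff {k : ℕ} {u v : FreeGroup α} :
    k ≤ cancellation u v ↔
      k ≤ u.norm ∧ k ≤ v.norm ∧ u⁻¹.toWord.take k = v.toWord.take k := by
  rw [← FreeGroup.norm_inv_eq (x := u)]
  exact le_commonPrefixLength_iff

lemma cancellation_inv_inv (u v : FreeGroup α) : cancellation v⁻¹ u⁻¹ = cancellation u v :=
  eq_of_forall_le_iff fun k => by
    simp only [le_cancellation_iff, FreeGroup.norm_inv_eq, inv_inv, eq_comm]
    tauto

lemma min_cancellation_le (u v w : FreeGroup α) :
    min (cancellation u v) (cancellation v⁻¹ w) ≤ cancellation u w := by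
  obtain ⟨hu, -, huv⟩ := le_cancellation_iff.1 (min_le_left (cancellation u v) (cancellation v⁻¹ w))
  obtain ⟨-, hw, hvw⟩ :=
    le_cancellation_iff.1 (min_le_right (cancellation u v) (cancellation v⁻¹ w))
  rw [inv_inv] at hvw
  exact le_cancellation_iff.2 ⟨hu, hw, huv.trans hvw⟩

lemma norm_mul_add_two_mul_cancellation (u v : FreeGroup α) :
    (u * v).norm + 2 * cancellation u v = u.norm + v.norm := by
  have h := norm_inv_mk_mul_mk (FreeGroup.isReduced_toWord (x := u⁻¹))
    (FreeGroup.isReduced_toWord (x := v))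
  rw [FreeGroup.mk_toWord, FreeGroup.mk_toWord, inv_inv] at h
  rwa [← FreeGroup.norm_inv_eq (x := u)]

lemma cancellation_inv_mul_add (u v : FreeGroup α) :
    cancellation u⁻¹ (u * v) + cancellation u v = u.norm := by
  have h₁ := norm_mul_add_two_mul_cancellation u v
  have h₂ := norm_mul_add_two_mul_cancellation u⁻¹ (u * v)
  rw [inv_mul_cancel_left, FreeGroup.norm_inv_eq] at h₂
  omega

lemma cancellation_mul_right {u v w : FreeGroup α}
    (h : cancellation u v + cancellation v w < v.norm) :
    cancellation u (v * w) = cancellation u v := by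
  have hcommon := cancellation_inv_mul_add v w
  have h₁ := min_cancellation_le u v (v * w)
  have h₂ := min_cancellation_le u (v * w) v
  rw [← cancellation_inv_inv (v * w)⁻¹, inv_inv] at h₂
  omega

lemma norm_le_norm_mul_self (w : FreeGroup α) : w.norm ≤ (w * w).norm := by
  have hsq := congrArg List.length (FreeGroup.reduceCyclically.reduce_flatten_replicate_succ
    (FreeGroup.isReduced_toWord (x := w)) 1)
  have hw := congrArg List.length
    (FreeGroup.reduceCyclically.conj_conjugator_reduceCyclically w.toWord)
  simp only [Nat.reduceAdd, List.replicate_succ, List.replicate_zero, List.flatten_cons,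
    List.flatten_nil, List.append_nil, List.length_append, FreeGroup.invRev_length] at hsq hw
  rw [FreeGroup.norm, FreeGroup.norm, FreeGroup.toWord_mul]
  omega

end Cancellation

section NielsenReduced

variable {α β : Type*} [DecidableEq β]

/-- Nielsen's conditions on the images of the letters under a homomorphism between free groups: in
a product of two of them at most half of each factor cancels, and in a product of three of them some
letter of the middle factor survives. The usual requirement that no image is trivial is the
case `a = b = c` of the second condition. -/
structure IsNielsenReduced (φ : FreeGroup α →* FreeGroup β) : Prop where
  two_mul_cancellation_le : ∀ ⦃a b : α × Bool⦄, b ≠ invLetter a →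
    2 * cancellation (φ (letter a)) (φ (letter b)) ≤ (φ (letter b)).norm
  cancellation_add_cancellation_lt : ∀ ⦃a b c : α × Bool⦄, b ≠ invLetter a → c ≠ invLetter b →
    cancellation (φ (letter a)) (φ (letter b)) + cancellation (φ (letter b)) (φ (letter c)) <
      (φ (letter b)).norm

namespace IsNielsenReduced

variable {φ : FreeGroup α →* FreeGroup β}

lemma norm_map_letter_pos (hφ : IsNielsenReduced φ) (a : α × Bool) : 0 < (φ (letter a)).norm :=
  (Nat.zero_le _).trans_lt
    (hφ.cancellation_add_cancellation_lt (ne_invLetter_self a) (ne_invLetter_self a))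

lemma cancellation_map_mk_cons (hφ : IsNielsenReduced φ) {a b : α × Bool} {l : List (α × Bool)}
    (h : FreeGroup.IsReduced (a :: b :: l)) :
    cancellation (φ (letter a)) (φ (FreeGroup.mk (b :: l))) =
        cancellation (φ (letter a)) (φ (letter b)) ∧
      cancellation (φ (letter a)) (φ (letter b)) + (b :: l).length ≤
        (φ (FreeGroup.mk (b :: l))).norm := by
  induction l generalizing a b with
  | nil =>
    have hhalf := hφ.two_mul_cancellation_le (isReduced_cons_cons_iff.1 h).1
    have hpos := hφ.norm_map_letter_pos b
    refine ⟨rfl, ?_⟩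
    rw [← letter, List.length_singleton]
    omega
  | cons c l ih =>
    obtain ⟨hab, hbc⟩ := isReduced_cons_cons_iff.1 h
    obtain ⟨hcancel, hlength⟩ := ih hbc
    have hlt := hφ.cancellation_add_cancellation_lt hab (isReduced_cons_cons_iff.1 hbc).1
    have hnorm := norm_mul_add_two_mul_cancellation (φ (letter b)) (φ (FreeGroup.mk (c :: l)))
    rw [← letter_mul_mk b, map_mul, List.length_cons]
    exact ⟨cancellation_mul_right (by rwa [hcancel]), by omega⟩

lemma norm_le_norm_map [DecidableEq α] (hφ : IsNielsenReduced φ) (w : FreeGroup α) :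
    w.norm ≤ (φ w).norm := by
  rcases hw : w.toWord with - | ⟨a, l⟩
  · simp [FreeGroup.norm, hw]
  · have hred : FreeGroup.IsReduced (a :: a :: l) :=
      isReduced_cons_cons_iff.2 ⟨ne_invLetter_self a, hw ▸ FreeGroup.isReduced_toWord⟩
    have h := (hφ.cancellation_map_mk_cons hred).2
    rw [← hw, FreeGroup.mk_toWord] at h
    exact (Nat.le_add_left _ _).trans h

end IsNielsenReduced

end NielsenReduced

section Size

/-- The rank of a word among the words of the same length in the lexicographic order, for an
arbitrary ordering of the letters. -/
noncomputable def lexRank {β : Type*} [Fintype β] (l : List β) : ℕ :=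
  Nat.ofDigits (Fintype.card β + 2) (l.map fun a => (Fintype.equivFin β a : ℕ)).reverse

lemma lexRank_append {β : Type*} [Fintype β] (l m : List β) :
    lexRank (l ++ m) = lexRank m + (Fintype.card β + 2) ^ m.length * lexRank l := by
  simp [lexRank, Nat.ofDigits_append]

lemma eq_of_lexRank_eq {β : Type*} [Fintype β] {l m : List β} (hlen : l.length = m.length)
    (h : lexRank l = lexRank m) : l = m := by
  have digit_lt (k : List β) :
      ∀ d ∈ (k.map fun a => (Fintype.equivFin β a : ℕ)).reverse, d < Fintype.card β + 2 := by
    simp only [List.mem_reverse, List.mem_map]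
    rintro _ ⟨a, -, rfl⟩
    exact (Fintype.equivFin β a).isLt.trans (by omega)
  have hdigits := Nat.ofDigits_inj_of_len_eq (by omega) (by simpa using hlen)
    (digit_lt l) (digit_lt m) h
  exact List.map_injective_iff.2 (Fin.val_injective.comp (Fintype.equivFin β).injective)
    (List.reverse_injective hdigits)

variable {α : Type*} [DecidableEq α]

/-- The first half of the reduced word of an element, rounded down. -/
def initialHalf (u : FreeGroup α) : List (α × Bool) := u.toWord.take (u.norm / 2)

lemma length_initialHalf (u : FreeGroup α) : (initialHalf u).length = u.norm / 2 := by
  rw [initialHalf, List.length_take, ← FreeGroup.norm]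
  omega

lemma eq_initialHalf_mul_inv {u : FreeGroup α} (hu : Even u.norm) :
    u = FreeGroup.mk (initialHalf u) * (FreeGroup.mk (initialHalf u⁻¹))⁻¹ := by
  have hlen : u.toWord.length - u.norm / 2 = u.norm / 2 := by
    obtain ⟨m, hm⟩ := hu
    rw [← FreeGroup.norm]
    omega
  have hinv : FreeGroup.invRev (initialHalf u⁻¹) = u.toWord.drop (u.norm / 2) := by
    rw [initialHalf, FreeGroup.norm_inv_eq, FreeGroup.toWord_inv, FreeGroup.invRev,
      FreeGroup.invRev, List.take_reverse]
    simp [Function.comp_def, hlen]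
  rw [FreeGroup.inv_mk, FreeGroup.mul_mk, hinv, initialHalf, List.take_append_drop,
    FreeGroup.mk_toWord]

variable [Fintype α]

/-- The sum of the lexicographic ranks of the initial halves of an element and of its inverse. It
breaks ties between elements of the same norm. -/
noncomputable def weight (u : FreeGroup α) : ℕ :=
  lexRank (initialHalf u) + lexRank (initialHalf u⁻¹)

/-- Replacing an initial segment of at most half the length leaves the initial half of the inverse
unchanged. -/
lemma weight_mk_append_lt {p q b : List (α × Bool)} (hlen : p.length = q.length)
    (hq : q.length ≤ b.length) (hlt : lexRank p < lexRank q)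
    (hpb : FreeGroup.IsReduced (p ++ b)) (hqb : FreeGroup.IsReduced (q ++ b)) :
    weight (FreeGroup.mk (p ++ b)) < weight (FreeGroup.mk (q ++ b)) := by
  simp only [weight, initialHalf, FreeGroup.norm_inv_eq, norm_mk_of_isReduced hpb,
    norm_mk_of_isReduced hqb, FreeGroup.toWord_inv, FreeGroup.toWord_mk, hpb.reduce_eq,
    hqb.reduce_eq, FreeGroup.invRev_append, List.length_append, hlen]
  have hhalf : (q.length + b.length) / 2 ≤ (FreeGroup.invRev b).length := by
    rw [FreeGroup.invRev_length]
    omega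
  rw [List.take_append_of_le_length hhalf, List.take_append_of_le_length hhalf,
    List.take_append, List.take_append, List.take_of_length_le (l := p) (by omega),
    List.take_of_length_le (l := q) (by omega), hlen, lexRank_append, lexRank_append]
  gcongr

/-- The measure minimised by Nielsen reduction: norm first, then weight. -/
noncomputable def size (u : FreeGroup α) : ℕ ×ₗ ℕ := toLex (u.norm, weight u)

lemma size_inv (u : FreeGroup α) : size u⁻¹ = size u := by
  simp only [size, weight, FreeGroup.norm_inv_eq, inv_inv, add_comm]

lemma norm_le_of_size_le {u v : FreeGroup α} (h : size u ≤ size v) : u.norm ≤ v.norm :=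
  Prod.Lex.monotone_fst _ _ h

/-- Here `u * v` arises from `v` by replacing the initial half of `u⁻¹` with that of `u`. -/
lemma size_mul_lt {u v : FreeGroup α} (hhalf : 2 * cancellation u v = u.norm)
    (huv : u.norm ≤ v.norm) (hlt : lexRank (initialHalf u) < lexRank (initialHalf u⁻¹)) :
    size (u * v) < size v := by
  have hnorm : (u * v).norm = v.norm := by
    have := norm_mul_add_two_mul_cancellation u v
    omega
  have hm : u.norm / 2 = cancellation u v := by omega
  set p := initialHalf u with hp
  set q := initialHalf u⁻¹ with hq
  set b := v.toWord.drop (cancellation u v) with hb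
  have hpl : p.length = cancellation u v := by rw [hp, length_initialHalf, hm]
  have hql : q.length = cancellation u v := by
    rw [hq, length_initialHalf, FreeGroup.norm_inv_eq, hm]
  have hbl : b.length = v.norm - cancellation u v := by rw [hb, List.length_drop, FreeGroup.norm]
  have hv : q ++ b = v.toWord := by
    obtain ⟨-, -, hcommon⟩ := le_cancellation_iff.1 (le_refl (cancellation u v))
    rw [hq, initialHalf, FreeGroup.norm_inv_eq, hm, hcommon, hb, List.take_append_drop]
  have huv' : u * v = FreeGroup.mk (p ++ b) := by
    rw [eq_initialHalf_mul_inv (u := u) ⟨cancellation u v, by omega⟩, ← hp, ← hq,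
      ← FreeGroup.mk_toWord (x := v), ← hv, ← FreeGroup.mul_mk, ← FreeGroup.mul_mk]
    group
  have hpb : FreeGroup.IsReduced (p ++ b) :=
    isReduced_of_norm_mk_eq (by rw [← huv', hnorm, List.length_append]; omega)
  have hweight := weight_mk_append_lt (hpl.trans hql.symm) (by omega) hlt hpb
    (hv ▸ FreeGroup.isReduced_toWord)
  rw [← huv', hv, FreeGroup.mk_toWord] at hweight
  exact Prod.Lex.toLex_lt_toLex.2 (Or.inr ⟨hnorm, hweight⟩)

end Size

section NielsenMinimal

variable {α β : Type*} [DecidableEq β] [Fintype β]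

/-- No elementary Nielsen move `b ↦ a * b` on the letters makes the image of `b` smaller. -/
def IsNielsenMinimal (φ : FreeGroup α →* FreeGroup β) : Prop :=
  ∀ a b : α × Bool, a.1 ≠ b.1 → size (φ (letter b)) ≤ size (φ (letter a) * φ (letter b))

namespace IsNielsenMinimal

variable {φ : FreeGroup α →* FreeGroup β}

lemma two_mul_cancellation_le_left (hφ : IsNielsenMinimal φ) {a b : α × Bool}
    (hab : b ≠ invLetter a) :
    2 * cancellation (φ (letter a)) (φ (letter b)) ≤ (φ (letter a)).norm := by
  have hle : (φ (letter b)).norm ≤ (φ (letter a) * φ (letter b)).norm := by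
    by_cases h : a.1 = b.1
    · obtain rfl := (eq_or_eq_invLetter h).resolve_right hab
      exact norm_le_norm_mul_self _
    · exact norm_le_of_size_le (hφ a b h)
  have := norm_mul_add_two_mul_cancellation (φ (letter a)) (φ (letter b))
  omega

lemma two_mul_cancellation_le_right (hφ : IsNielsenMinimal φ) {a b : α × Bool}
    (hab : b ≠ invLetter a) :
    2 * cancellation (φ (letter a)) (φ (letter b)) ≤ (φ (letter b)).norm := by
  have h := hφ.two_mul_cancellation_le_left (a := invLetter b) (b := invLetter a)
    (by simpa using hab.symm)
  simpa only [letter_invLetter, map_inv, cancellation_inv_inv, FreeGroup.norm_inv_eq] using h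

lemma lexRank_initialHalf_inv_le (hφ : IsNielsenMinimal φ) {a b : α × Bool}
    (hab : b ≠ invLetter a)
    (hhalf : 2 * cancellation (φ (letter a)) (φ (letter b)) = (φ (letter a)).norm) :
    lexRank (initialHalf (φ (letter a))⁻¹) ≤ lexRank (initialHalf (φ (letter a))) := by
  by_cases h : a.1 = b.1
  · obtain rfl := (eq_or_eq_invLetter h).resolve_right hab
    obtain ⟨-, -, hcommon⟩ := le_cancellation_iff.1
      (le_refl (cancellation (φ (letter b)) (φ (letter b))))
    rw [initialHalf, initialHalf, FreeGroup.norm_inv_eq, ← hhalf,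
      Nat.mul_div_cancel_left _ two_pos, hcommon]
  · by_contra! hlt
    have hle := hφ.two_mul_cancellation_le_right hab
    exact (hφ a b h).not_gt (size_mul_lt hhalf (hhalf ▸ hle) hlt)

/-- If the whole of the middle image `φ b` cancelled, exactly one half would cancel on either side.
Minimality then forces both halves to have the same rank, so that `φ b = 1`. -/
lemma isNielsenReduced (hφ : IsNielsenMinimal φ) (hinj : Function.Injective φ) :
    IsNielsenReduced φ where
  two_mul_cancellation_le _ _ := hφ.two_mul_cancellation_le_right
  cancellation_add_cancellation_lt a b c hab hbc := by
    have hle₁ := hφ.two_mul_cancellation_le_right hab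
    have hle₂ := hφ.two_mul_cancellation_le_left hbc
    by_contra! hge
    have hrank₁ := hφ.lexRank_initialHalf_inv_le hbc (by omega)
    have hrank₂ := hφ.lexRank_initialHalf_inv_le (a := invLetter b) (b := invLetter a)
      (by simpa using hab.symm)
      (by
        rw [letter_invLetter, letter_invLetter, map_inv, map_inv, cancellation_inv_inv,
          FreeGroup.norm_inv_eq]
        omega)
    rw [letter_invLetter, map_inv, inv_inv] at hrank₂
    have hhalves : initialHalf (φ (letter b)) = initialHalf (φ (letter b))⁻¹ :=
      eq_of_lexRank_eq (by simp only [length_initialHalf, FreeGroup.norm_inv_eq])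
        (hrank₂.antisymm hrank₁)
    have hone : φ (letter b) = 1 := by
      rw [eq_initialHalf_mul_inv (u := φ (letter b))
        ⟨cancellation (φ (letter a)) (φ (letter b)), by omega⟩, ← hhalves, mul_inv_cancel]
    exact letter_ne_one b ((map_eq_one_iff φ hinj).1 hone)

end IsNielsenMinimal

end NielsenMinimal

section Automorphisms

variable {α : Type*}

lemma aut_ext_letter {f g : MulAut (FreeGroup α)} (b : α × Bool)
    (hb : f (letter b) = g (letter b))
    (h : ∀ k, k ≠ b.1 → f (FreeGroup.of k) = g (FreeGroup.of k)) : f = g :=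
  MulEquiv.toMonoidHom_injective (hom_ext_letter (f := f.toMonoidHom) (g := g.toMonoidHom) b hb h)

lemma aut_ext {f g : MulAut (FreeGroup α)} (h : ∀ k, f (FreeGroup.of k) = g (FreeGroup.of k)) :
    f = g :=
  MulEquiv.toMonoidHom_injective (FreeGroup.ext_hom f.toMonoidHom g.toMonoidHom h)

/-- The action of the permutations of the generators on the free group. -/
def permAut : Equiv.Perm α →* MulAut (FreeGroup α) where
  toFun π := FreeGroup.freeGroupCongr π
  map_one' := FreeGroup.freeGroupCongr_refl
  map_mul' π σ := (FreeGroup.freeGroupCongr_trans σ π).symm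

lemma permAut_of (π : Equiv.Perm α) (k : α) :
    permAut π (FreeGroup.of k) = FreeGroup.of (π k) := rfl

lemma lift_of_zpow_comp (s t : α → ℤˣ) :
    (FreeGroup.lift fun k => FreeGroup.of k ^ (s k : ℤ)).comp
      (FreeGroup.lift fun k => FreeGroup.of k ^ (t k : ℤ)) =
      FreeGroup.lift fun k => FreeGroup.of k ^ ((s * t) k : ℤ) :=
  FreeGroup.ext_hom _ _ fun k => by simp [_root_.zpow_mul]

lemma lift_of_zpow_one :
    (FreeGroup.lift fun k : α => FreeGroup.of k ^ ((1 : α → ℤˣ) k : ℤ)) = MonoidHom.id _ :=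
  FreeGroup.ext_hom _ _ fun k => by simp

/-- The action of the sign changes of the generators on the free group. -/
def signAut : (α → ℤˣ) →* MulAut (FreeGroup α) where
  toFun s := MonoidHom.toMulEquiv (FreeGroup.lift fun k => FreeGroup.of k ^ (s k : ℤ))
    (FreeGroup.lift fun k => FreeGroup.of k ^ (s⁻¹ k : ℤ))
    (by rw [lift_of_zpow_comp, inv_mul_cancel, lift_of_zpow_one])
    (by rw [lift_of_zpow_comp, mul_inv_cancel, lift_of_zpow_one])
  map_one' := MulEquiv.toMonoidHom_injective lift_of_zpow_one
  map_mul' s t := MulEquiv.toMonoidHom_injective (lift_of_zpow_comp s t).symm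

lemma signAut_of (s : α → ℤˣ) (k : α) :
    signAut s (FreeGroup.of k) = FreeGroup.of k ^ (s k : ℤ) :=
  FreeGroup.lift_apply_of

lemma exists_permAut_mul_signAut_of_eq {l : α → α × Bool}
    (hl : Function.Bijective fun k => (l k).1) :
    ∃ (π : Equiv.Perm α) (s : α → ℤˣ), ∀ k,
      (permAut π * signAut s) (FreeGroup.of k) = letter (l k) := by
  refine ⟨Equiv.ofBijective _ hl, fun k => if (l k).2 then 1 else -1, fun k => ?_⟩
  rw [MulAut.mul_apply, signAut_of, map_zpow, permAut_of, Equiv.ofBijective_apply]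
  obtain ⟨i, _ | _⟩ := l k <;> simp

lemma exists_eq_permAut_mul_signAut [Finite α] {ψ : MulAut (FreeGroup α)}
    (h : ∀ k, ∃ a, ψ (FreeGroup.of k) = letter a) : ∃ π s, ψ = permAut π * signAut s := by
  choose l hl using h
  have hinj : Function.Injective fun k => (l k).1 := fun i j => not_imp_not.1 fun hij =>
    fst_ne_fst_of_map_letter (φ := ψ.toMonoidHom) (a := (i, true)) (b := (j, true)) ψ.injective
      (hl i) (hl j) hij
  obtain ⟨π, s, hπs⟩ := exists_permAut_mul_signAut_of_eq (Finite.injective_iff_bijective.1 hinj)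
  exact ⟨π, s, aut_ext fun k => (hl k).trans (hπs k).symm⟩

lemma exists_aut_letter_eq {a b c d : α × Bool} (hab : a.1 ≠ b.1) (hcd : c.1 ≠ d.1) :
    ∃ ψ : MulAut (FreeGroup α), (∀ k, ∃ e, ψ (FreeGroup.of k) = letter e) ∧
      ψ (letter a) = letter c ∧ ψ (letter b) = letter d := by
  classical
  obtain ⟨π, hπa, hπb⟩ := MulAction.is_two_pretransitive_iff.1
    (Equiv.Perm.isMultiplyPretransitive α 2) hab hcd
  rw [Equiv.Perm.smul_def] at hπa hπb
  obtain ⟨σ, s, hψ⟩ := exists_permAut_mul_signAut_of_eq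
    (l := fun k => (π k, if k = a.1 then c.2 == a.2 else d.2 == b.2)) π.bijective
  have map_letter {e e' : α × Bool}
      (h : (permAut σ * signAut s) (FreeGroup.of e.1) = letter (e'.1, e'.2 == e.2)) :
      (permAut σ * signAut s) (letter e) = letter e' := by
    obtain ⟨i, _ | _⟩ := e <;> obtain ⟨j, _ | _⟩ := e' <;> simp_all
  refine ⟨_, fun k => ⟨_, hψ k⟩, map_letter ?_, map_letter ?_⟩
  · rw [hψ, if_pos rfl, hπa]
  · rw [hψ, if_neg hab.symm, hπb]

variable [DecidableEq α]

/-- The automorphism inverting the `i`-th generator. -/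
def inversion (i : α) : MulAut (FreeGroup α) := signAut (Pi.mulSingle i (-1))

lemma inversion_of_self (i : α) : inversion i (FreeGroup.of i) = (FreeGroup.of i)⁻¹ := by
  simp [inversion, signAut_of]

lemma inversion_of_of_ne {i k : α} (h : k ≠ i) :
    inversion i (FreeGroup.of k) = FreeGroup.of k := by
  simp [inversion, signAut_of, h]

lemma inversion_mul_self (i : α) : inversion i * inversion i = 1 := by
  rw [inversion, ← map_mul, ← Pi.mulSingle_mul, neg_mul_neg, one_mul, Pi.mulSingle_one, map_one]

/-- The endomorphism sending the letter `b` to `a * b` and fixing the generators other than the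
one underlying `b`. -/
def transvectionHom (a b : α × Bool) : FreeGroup α →* FreeGroup α :=
  FreeGroup.lift fun k =>
    if k = b.1 then
      if b.2 then letter a * FreeGroup.of k else FreeGroup.of k * (letter a)⁻¹
    else FreeGroup.of k

lemma transvectionHom_self (a b : α × Bool) :
    transvectionHom a b (letter b) = letter a * letter b := by
  obtain ⟨i, _ | _⟩ := b
  · rw [letter_false, map_inv, transvectionHom, FreeGroup.lift_apply_of, if_pos rfl,
      if_neg Bool.false_ne_true, _root_.mul_inv_rev, inv_inv]
  · rw [letter_true, transvectionHom, FreeGroup.lift_apply_of, if_pos rfl, if_pos rfl]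

lemma transvectionHom_of_ne (a : α × Bool) {b : α × Bool} {k : α} (h : k ≠ b.1) :
    transvectionHom a b (FreeGroup.of k) = FreeGroup.of k := by
  rw [transvectionHom, FreeGroup.lift_apply_of, if_neg h]

lemma transvectionHom_letter_of_ne (a : α × Bool) {b c : α × Bool} (h : c.1 ≠ b.1) :
    transvectionHom a b (letter c) = letter c := by
  obtain ⟨k, _ | _⟩ := c <;> simp [transvectionHom_of_ne a h, -FreeGroup.inv_mk]

lemma transvectionHom_invLetter_comp {a b : α × Bool} (h : a.1 ≠ b.1) :
    (transvectionHom (invLetter a) b).comp (transvectionHom a b) = MonoidHom.id _ := by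
  refine hom_ext_letter b ?_ fun k hk => ?_
  · rw [MonoidHom.comp_apply, transvectionHom_self, map_mul, transvectionHom_self,
      transvectionHom_letter_of_ne _ h, letter_invLetter, mul_inv_cancel_left, MonoidHom.id_apply]
  · rw [MonoidHom.comp_apply, transvectionHom_of_ne _ hk, transvectionHom_of_ne _ hk,
      MonoidHom.id_apply]

/-- The Nielsen transvection sending the letter `b` to `a * b` and fixing the generators other than
the one underlying `b`. -/
def transvection (a b : α × Bool) (h : a.1 ≠ b.1) : MulAut (FreeGroup α) :=
  MonoidHom.toMulEquiv (transvectionHom a b) (transvectionHom (invLetter a) b)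
    (transvectionHom_invLetter_comp h)
    (by simpa using transvectionHom_invLetter_comp (a := invLetter a) (b := b) h)

section

variable {a b : α × Bool} (h : a.1 ≠ b.1)

lemma transvection_self : transvection a b h (letter b) = letter a * letter b :=
  transvectionHom_self a b

lemma transvection_of_ne {k : α} (hk : k ≠ b.1) :
    transvection a b h (FreeGroup.of k) = FreeGroup.of k :=
  transvectionHom_of_ne a hk

lemma transvection_letter_of_ne {c : α × Bool} (hc : c.1 ≠ b.1) :
    transvection a b h (letter c) = letter c :=
  transvectionHom_letter_of_ne a hc

end

lemma mul_transvection {a b c d : α × Bool} (hab : a.1 ≠ b.1) (hcd : c.1 ≠ d.1)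
    {ψ : MulAut (FreeGroup α)} (hψ : ∀ k, ∃ e, ψ (FreeGroup.of k) = letter e)
    (ha : ψ (letter a) = letter c) (hb : ψ (letter b) = letter d) :
    ψ * transvection a b hab = transvection c d hcd * ψ := by
  refine aut_ext_letter b ?_ fun k hk => ?_
  · rw [MulAut.mul_apply, MulAut.mul_apply, transvection_self, map_mul, ha, hb, transvection_self]
  · obtain ⟨e, he⟩ := hψ k
    have hed : e.1 ≠ d.1 := fst_ne_fst_of_map_letter (φ := ψ.toMonoidHom) (a := (k, true))
      ψ.injective he hb hk
    rw [MulAut.mul_apply, MulAut.mul_apply, transvection_of_ne _ hk, he,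
      transvection_letter_of_ne _ hed]

lemma transvection_mem_of_normal {N : Subgroup (MulAut (FreeGroup α))} [hN : N.Normal]
    {a b c d : α × Bool} {hab : a.1 ≠ b.1} (hmem : transvection a b hab ∈ N) (hcd : c.1 ≠ d.1) :
    transvection c d hcd ∈ N := by
  obtain ⟨ψ, hψ, ha, hb⟩ := exists_aut_letter_eq hab hcd
  have hconj := hN.conj_mem _ hmem ψ
  rwa [mul_transvection hab hcd hψ ha hb, mul_inv_cancel_right] at hconj

/-- The analogue of the factorisation of the integral matrix with rows `(0, 1)` and `(-1, 0)` into
three elementary matrices. -/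
lemma transvection_mul_transvection_mul_transvection {i j : α} (h : i ≠ j) :
    transvection (i, true) (j, true) h * transvection (j, false) (i, true) h.symm *
      transvection (i, false) (j, false) h = permAut (Equiv.swap i j) * inversion i := by
  have h₁ : transvection (i, true) (j, true) h (FreeGroup.of j) =
      FreeGroup.of i * FreeGroup.of j := transvection_self h
  have h₂ : transvection (j, false) (i, true) h.symm (FreeGroup.of i) =
      (FreeGroup.of j)⁻¹ * FreeGroup.of i := transvection_self h.symm
  have h₃ : transvection (i, false) (j, false) h (FreeGroup.of j) =
      FreeGroup.of j * FreeGroup.of i := by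
    have := congrArg (·⁻¹) (transvection_self (a := (i, false)) (b := (j, false)) h)
    simpa only [letter_false, map_inv, inv_inv, _root_.mul_inv_rev] using this
  refine aut_ext fun k => ?_
  simp only [MulAut.mul_apply]
  by_cases hki : k = i
  · subst hki
    rw [transvection_of_ne (b := (j, false)) _ h, h₂, map_mul, map_inv, h₁,
      transvection_of_ne (b := (j, true)) _ h, inversion_of_self, map_inv, permAut_of,
      Equiv.swap_apply_left, _root_.mul_inv_rev, inv_mul_cancel_right]
  rw [inversion_of_of_ne hki, permAut_of]
  by_cases hkj : k = j
  · subst hkj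
    rw [h₃, map_mul, h₂, transvection_of_ne (b := (i, true)) _ hki, mul_inv_cancel_left,
      transvection_of_ne (b := (k, true)) _ h, Equiv.swap_apply_right]
  · rw [transvection_of_ne (b := (j, false)) _ hkj, transvection_of_ne (b := (i, true)) _ hki,
      transvection_of_ne (b := (j, true)) _ hkj, Equiv.swap_apply_of_ne_of_ne hki hkj]

end Automorphisms

section NielsenTheorem

variable {α : Type*} [DecidableEq α]

section

variable [Fintype α]

/-- The total size of the images of the generators, which Nielsen reduction decreases. -/
noncomputable def complexity (φ : MulAut (FreeGroup α)) : ℕ ×ₗ ℕ :=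
  ∑ k, size (φ (FreeGroup.of k))

lemma complexity_mul_transvection_lt {φ : MulAut (FreeGroup α)} {a b : α × Bool} (h : a.1 ≠ b.1)
    (hlt : size (φ (letter a) * φ (letter b)) < size (φ (letter b))) :
    complexity (φ * transvection a b h) < complexity φ := by
  have size_map_of (ψ : MulAut (FreeGroup α)) :
      size (ψ (FreeGroup.of b.1)) = size (ψ (letter b)) := by
    obtain ⟨i, _ | _⟩ := b
    · rw [letter_false, map_inv, size_inv]
    · rfl
  have hlt' : size ((φ * transvection a b h) (FreeGroup.of b.1)) < size (φ (FreeGroup.of b.1)) := by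
    rwa [size_map_of, size_map_of, MulAut.mul_apply, transvection_self, map_mul]
  refine Finset.sum_lt_sum (fun k _ => ?_) ⟨b.1, Finset.mem_univ _, hlt'⟩
  by_cases hk : k = b.1
  · exact hk ▸ hlt'.le
  · rw [MulAut.mul_apply, transvection_of_ne h hk]

lemma IsNielsenMinimal.exists_inv_eq_permAut_mul_signAut {φ : MulAut (FreeGroup α)}
    (hφ : IsNielsenMinimal φ.toMonoidHom) : ∃ π s, φ⁻¹ = permAut π * signAut s := by
  refine exists_eq_permAut_mul_signAut fun k => exists_eq_letter_of_norm_eq_one ?_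
  have hle := (hφ.isNielsenReduced φ.injective).norm_le_norm_map (φ⁻¹ (FreeGroup.of k))
  rw [MulEquiv.toMonoidHom_eq_coe, MonoidHom.coe_coe, MulAut.apply_inv_self,
    FreeGroup.norm_of] at hle
  have hne : (φ⁻¹ (FreeGroup.of k)).norm ≠ 0 := by
    rw [Ne, FreeGroup.norm_eq_zero, EmbeddingLike.map_eq_one_iff]
    exact FreeGroup.of_ne_one k
  omega

end

variable [Finite α]

lemma signAut_mem {H : Subgroup (MulAut (FreeGroup α))} (hI : ∀ i, inversion i ∈ H)
    (s : α → ℤˣ) : signAut s ∈ H := by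
  cases nonempty_fintype α
  rw [← Subgroup.mem_comap, ← Finset.univ_prod_mulSingle s]
  refine Subgroup.prod_mem _ fun i _ => ?_
  rcases Int.units_eq_one_or (s i) with hi | hi
  · rw [hi, Pi.mulSingle_one]
    exact one_mem _
  · rw [hi]
    exact hI i

lemma permAut_mem {H : Subgroup (MulAut (FreeGroup α))}
    (hswap : ∀ i j, i ≠ j → permAut (Equiv.swap i j) ∈ H) (π : Equiv.Perm α) : permAut π ∈ H := by
  cases nonempty_fintype α
  suffices ⊤ ≤ H.comap permAut from this (Subgroup.mem_top π)
  rw [← Equiv.Perm.closure_isSwap, Subgroup.closure_le]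
  rintro _ ⟨i, j, hij, rfl⟩
  exact hswap i j hij

/-- **Nielsen's theorem**. -/
theorem eq_top_of_transvection_mem {H : Subgroup (MulAut (FreeGroup α))}
    (hT : ∀ (a b : α × Bool) (h : a.1 ≠ b.1), transvection a b h ∈ H)
    (hI : ∀ i, inversion i ∈ H) : H = ⊤ := by
  cases nonempty_fintype α
  have hswap (i j : α) (hij : i ≠ j) : permAut (Equiv.swap i j) ∈ H := by
    rw [← H.mul_mem_cancel_right (hI i), ← transvection_mul_transvection_mul_transvection hij]
    exact H.mul_mem (H.mul_mem (hT _ _ _) (hT _ _ _)) (hT _ _ _)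
  refine (Subgroup.eq_top_iff' H).2 fun φ => ?_
  induction hc : complexity φ using WellFoundedLT.induction generalizing φ with
  | _ c ih =>
    by_cases hφ : IsNielsenMinimal φ.toMonoidHom
    · obtain ⟨π, s, hπs⟩ := hφ.exists_inv_eq_permAut_mul_signAut
      rw [← H.inv_mem_iff, hπs]
      exact H.mul_mem (permAut_mem hswap π) (signAut_mem hI s)
    · simp only [IsNielsenMinimal, not_forall, not_le] at hφ
      obtain ⟨a, b, hab, hlt⟩ := hφ
      exact (H.mul_mem_cancel_right (hT a b hab)).1
        (ih _ (hc ▸ complexity_mul_transvection_lt hab hlt) _ rfl)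

end NielsenTheorem

section Groups

variable {G M : Type*} [Group G] [Group M]

lemma ker_le_of_sup_zpowers_eq_top (d : G →* M) {N : Subgroup G} [N.Normal] {t : G}
    (ht : t * t = 1) (hdt : d t ≠ 1) (hN : N ≤ d.ker) (htop : N ⊔ Subgroup.zpowers t = ⊤) :
    d.ker ≤ N := by
  intro g hg
  obtain ⟨x, hx, z, hz, rfl⟩ := Subgroup.mem_sup_of_normal_left.1 (htop ▸ Subgroup.mem_top g)
  obtain ⟨m, rfl⟩ := Subgroup.mem_zpowers_iff.1 hz
  have htm : d (t ^ m) = 1 := (d.ker.mul_mem_cancel_left (hN hx)).1 hg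
  rcases Int.even_or_odd' m with ⟨c, rfl | rfl⟩
  · rwa [_root_.zpow_mul, zpow_two, ht, _root_.one_zpow, mul_one]
  · rw [_root_.zpow_add_one, _root_.zpow_mul, zpow_two, ht, _root_.one_zpow, one_mul] at htm
    exact absurd htm hdt

lemma eq_top_of_ker_le (d : G →* ℤˣ) {N : Subgroup G} (hker : d.ker ≤ N) {f : G} (hf : f ∈ N)
    (hdf : d f = -1) : N = ⊤ := by
  refine (Subgroup.eq_top_iff' N).2 fun g => ?_
  rcases Int.units_eq_one_or (d g) with hg | hg
  · exact hker hg
  · refine (N.mul_mem_cancel_right hf).1 (hker ?_)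
    rw [MonoidHom.mem_ker, map_mul, hg, hdf, neg_mul_neg, one_mul]

end Groups

section Determinant

variable {n : ℕ}

lemma coe_detρ (g : FrAut n) : (detρ n g : ℤ) = (mat g).det := rfl

lemma mat_signAut (s : Fin n → ℤˣ) : mat (signAut s) = Matrix.diagonal fun i => (s i : ℤ) := by
  ext k l
  rw [mat, Matrix.of_apply, signAut_of, map_zpow, toAdd_zpow, Matrix.diagonal_apply]
  by_cases hkl : k = l <;> simp [expSum, hkl, eq_comm]

lemma detρ_signAut (s : Fin n → ℤˣ) : detρ n (signAut s) = ∏ i, s i := by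
  ext
  rw [coe_detρ, mat_signAut, Matrix.det_diagonal, Units.coe_prod]

lemma detρ_inversion (i : Fin n) : detρ n (inversion i) = -1 := by
  rw [inversion, detρ_signAut, Finset.prod_pi_mulSingle']
  simp

lemma mat_transvection {i j : Fin n} (h : j ≠ i) :
    mat (transvection (j, true) (i, true) h) = Matrix.transvection j i 1 := by
  ext k l
  rw [mat, Matrix.of_apply, Matrix.transvection, Matrix.add_apply, Matrix.one_apply,
    Matrix.single_apply]
  by_cases hl : l = i
  · subst hl
    rw [← letter_true, transvection_self]
    simp [expSum, add_comm, eq_comm]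
  · rw [transvection_of_ne (b := (i, true)) _ hl]
    simp [expSum, Ne.symm hl, eq_comm]

lemma detρ_transvection {i j : Fin n} (h : j ≠ i) :
    detρ n (transvection (j, true) (i, true) h) = 1 := by
  ext
  rw [coe_detρ, mat_transvection, Matrix.det_transvection_of_ne j i h, Units.val_one]

end Determinant

section NormalClosure

variable {n : ℕ}

lemma sup_zpowers_inversion_eq_top {N : Subgroup (FrAut n)}
    (hT : ∀ (a b : Fin n × Bool) (h : a.1 ≠ b.1), transvection a b h ∈ N) (i : Fin n) :
    N ⊔ Subgroup.zpowers (inversion i) = ⊤ := by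
  have hswap {k l : Fin n} (hkl : k ≠ l) :
      permAut (Equiv.swap k l) * inversion k ∈ N ⊔ Subgroup.zpowers (inversion i) := by
    rw [← transvection_mul_transvection_mul_transvection hkl]
    exact Subgroup.mem_sup_left (N.mul_mem (N.mul_mem (hT _ _ _) (hT _ _ _)) (hT _ _ _))
  have hi : inversion i ∈ N ⊔ Subgroup.zpowers (inversion i) :=
    Subgroup.mem_sup_right (Subgroup.mem_zpowers _)
  refine eq_top_of_transvection_mem (fun a b h => Subgroup.mem_sup_left (hT a b h)) fun k => ?_
  by_cases hk : k = i
  · rwa [hk]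
  · have hik := (Subgroup.mul_mem_cancel_right _ hi).1 (hswap (Ne.symm hk))
    exact (Subgroup.mul_mem_cancel_left _ hik).1 (Equiv.swap_comm k i ▸ hswap hk)

lemma SAut_le_normalClosure_transvection {i j : Fin n} (h : j ≠ i) :
    SAut n ≤ Subgroup.normalClosure {transvection (j, true) (i, true) h} := by
  have hT (a b : Fin n × Bool) (hab : a.1 ≠ b.1) :
      transvection a b hab ∈ Subgroup.normalClosure {transvection (j, true) (i, true) h} :=
    transvection_mem_of_normal (Subgroup.subset_normalClosure (Set.mem_singleton _)) hab
  refine ker_le_of_sup_zpowers_eq_top (detρ n) (inversion_mul_self i) ?_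
    (Subgroup.normalClosure_le_normal (Set.singleton_subset_iff.2 (detρ_transvection h)))
    (sup_zpowers_inversion_eq_top hT i)
  rw [detρ_inversion]
  decide

lemma SOut_le_of_toOut_transvection_mem {N : Subgroup (OutF n)} [N.Normal] {i j : Fin n}
    {h : j ≠ i} (hN : toOut n (transvection (j, true) (i, true) h) ∈ N) : SOut n ≤ N := by
  have hcomap : SAut n ≤ N.comap (toOut n) :=
    (SAut_le_normalClosure_transvection h).trans
      (Subgroup.normalClosure_le_normal (Set.singleton_subset_iff.2 hN))
  intro g hg
  obtain ⟨g, rfl⟩ := QuotientGroup.mk'_surjective (Inn n) g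
  exact hcomap hg

end NormalClosure

theorem normalClosure_of_left_multiplication_out_general (n : ℕ) (f : OutF n)
    (h : ∃ i j : Fin n, i ≠ j ∧ ∃ L : FrAut n,
      L (FreeGroup.of i) = FreeGroup.of j * FreeGroup.of i ∧
      (∀ k, k ≠ i → L (FreeGroup.of k) = FreeGroup.of k) ∧
      toOut n L ∈ Subgroup.normalClosure {f}) :
    (detρOut n f = 1 → Subgroup.normalClosure {f} = SOut n) ∧
    (detρOut n f = -1 → Subgroup.normalClosure {f} = ⊤) := by
  obtain ⟨i, j, hij, L, hLi, hLk, hL⟩ := h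
  obtain rfl : L = transvection (j, true) (i, true) hij.symm :=
    aut_ext_letter (i, true) (hLi.trans (transvection_self hij.symm).symm)
      fun k hk => (hLk k hk).trans (transvection_of_ne (b := (i, true)) hij.symm hk).symm
  have hle : SOut n ≤ Subgroup.normalClosure {f} := SOut_le_of_toOut_transvection_mem hL
  refine ⟨fun hf => hle.antisymm' ?_, fun hf => ?_⟩
  · exact Subgroup.normalClosure_le_normal (N := (detρOut n).ker) (Set.singleton_subset_iff.2 hf)
  · exact eq_top_of_ker_le (detρOut n) hle
      (Subgroup.subset_normalClosure (Set.mem_singleton f)) hf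

/-- **Lemma 3.4.** For `n ≥ 3` and `f ∈ Out(F_n)`, if the image in `Out(F_n)` of some left
multiplication `L_{x_i x_j}` (with `i ≠ j`) lies in the normal closure `N(f)`, then
`N(f) = SOut(F_n)` if `det ρ̄(f) = 1` and `N(f) = Out(F_n)` if `det ρ̄(f) = -1`. -/
theorem normalClosure_of_left_multiplication_out (n : ℕ) (hn : 3 ≤ n) (f : OutF n)
    (h : ∃ i j : Fin n, i ≠ j ∧ ∃ L : FrAut n,
      L (FreeGroup.of i) = FreeGroup.of j * FreeGroup.of i ∧
      (∀ k, k ≠ i → L (FreeGroup.of k) = FreeGroup.of k) ∧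
      toOut n L ∈ Subgroup.normalClosure {f}) :
    (detρOut n f = 1 → Subgroup.normalClosure {f} = SOut n) ∧
    (detρOut n f = -1 → Subgroup.normalClosure {f} = ⊤) :=
  normalClosure_of_left_multiplication_out_general n f h

end NormalClosurePaper
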